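/- There exist exactly three Hausdorff locally compact shift-continuous topologies on the semigroup 𝒞₊(p,q)⁰ up to homeomorphism; that is, there exist Hausdorff locally compact shift-continuous topologies τ₁, τ₂, τ₃ on 𝒞₊(p,q)⁰ such that the spaces (𝒞₊(p,q)⁰, τ_k), k = 1,2,3, are pairwise non-homeomorphic, and every Hausdorff locally compact shift-continuous topology τ on 𝒞₊(p,q)⁰ makes (𝒞₊(p,q)⁰, τ) homeomorphic to one of these three spaces. -/

import Mathlib

/-!
Idempotents `(s,s)` control the topology away from zero: in a Hausdorff shift-continuous topology the
fixed set `{y | y·(s,s) = y}` is closed, and its complement `{(m,n) | n < s}` is finite, so every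
nonzero point is isolated (`isolated`). Local compactness then supplies a compact
neighbourhood `K` of zero, and the neighbourhoods of zero are exactly the sets containing zero and
almost all of `K`. Hence every topology in question is `topA A` for a set `A` of nonzero elements,
where a set containing zero is open iff it contains all but finitely many points of `A`
(`eq_topA`).

Up to homeomorphism only three cases remain: `A` finite (discrete space), `A` cofinite (compact
space), and `A` infinite and coinfinite, where any two choices of `A` differ by a permutation of the
countable set of nonzero elements. All three occur: shifts have finite fibres, so `topA A` is
shift-continuous as soon as `A` is an ideal (`topA_hlcsc`), and `∅`, the whole semigroup and
`{(m,n) | m < n}` are ideals, the last because `(m,n) ↦ n - m` is additive.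
-/

open Topology

/-- The semigroup `𝒞₊(p,q)`, modeled as pairs `(i,j)` of naturals with `i ≤ j`
(the pair `(i,j)` represents `qⁱpʲ` in the bicyclic monoid). -/
abbrev CpCarrier : Type := {p : ℕ × ℕ // p.1 ≤ p.2}

/-- Multiplication: `(k,l)·(m,n) = (k−l+m, n)` if `l < m`; `(k,n)` if `l = m`;
`(k, l−m+n)` if `l > m`. -/
instance : Mul CpCarrier :=
  ⟨fun a b =>
    ⟨if a.1.2 < b.1.1 then (a.1.1 + (b.1.1 - a.1.2), b.1.2)
      else if a.1.2 = b.1.1 then (a.1.1, b.1.2)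
      else (a.1.1, a.1.2 - b.1.1 + b.1.2), by
      have ha := a.2; have hb := b.2
      split_ifs <;> dsimp only <;> omega⟩⟩

/-- `𝒞₊(p,q)⁰`: the semigroup `𝒞₊(p,q)` with an adjoined zero. -/
abbrev Cp0 : Type := WithZero CpCarrier

/-- The element `(i,j)` of `𝒞₊(p,q)` (representing `qⁱpʲ = bⁱaʲ`). -/
def CpElem (i j : ℕ) (h : i ≤ j) : CpCarrier := ⟨(i, j), h⟩

/-- The subset `𝒞₊ⁱ(p,q) = {(i, i+s) : s ∈ ℕ}` viewed inside `𝒞₊(p,q)⁰`. -/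
def Ci (i : ℕ) : Set Cp0 :=
  {y | ∃ s : ℕ, y = (CpElem i (i + s) (Nat.le_add_right i s) : Cp0)}


/-- A Hausdorff locally compact shift-continuous topology on `𝒞₊(p,q)⁰`. -/
def IsHLCSC (τ : TopologicalSpace Cp0) : Prop :=
  @T2Space Cp0 τ ∧ @LocallyCompactSpace Cp0 τ ∧
    ∀ s : Cp0, Continuous[τ, τ] (fun y => s * y) ∧ Continuous[τ, τ] (fun y => y * s)

/-- The spaces `(𝒞₊(p,q)⁰, τ₁)` and `(𝒞₊(p,q)⁰, τ₂)` are homeomorphic. -/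
def HomeoTop (τ₁ τ₂ : TopologicalSpace Cp0) : Prop :=
  ∃ f : Cp0 ≃ Cp0, Continuous[τ₁, τ₂] f ∧ Continuous[τ₂, τ₁] f.symm

/-! ### The topologies `topA A` -/

/-- The topology on `𝒞₊(p,q)⁰` in which nonzero points are isolated and a set containing zero is
open iff it contains all but finitely many points of `A`; thus zero is the point at infinity
of `A`. -/
@[reducible]
def topA (A : Set CpCarrier) : TopologicalSpace Cp0 where
  IsOpen U := (0 : Cp0) ∈ U → {a ∈ A | (a : Cp0) ∉ U}.Finite
  isOpen_univ := by simp
  isOpen_inter U V hU hV h := by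
    refine ((hU h.1).union (hV h.2)).subset ?_
    rintro a ⟨ha, hn⟩
    by_cases h1 : (a : Cp0) ∈ U
    · exact Or.inr ⟨ha, fun h2 => hn ⟨h1, h2⟩⟩
    · exact Or.inl ⟨ha, h1⟩
  isOpen_sUnion S hS := by
    rintro ⟨U, hU, h0⟩
    exact (hS U hU h0).subset fun a ha => ⟨ha.1, fun h => ha.2 ⟨U, hU, h⟩⟩

lemma topA_open {A : Set CpCarrier} {U : Set Cp0} :
    IsOpen[topA A] U ↔ ((0 : Cp0) ∈ U → {a ∈ A | (a : Cp0) ∉ U}.Finite) := Iff.rfl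

lemma topA_isolated (A : Set CpCarrier) (a : CpCarrier) : IsOpen[topA A] {(a : Cp0)} := by
  rw [topA_open]
  intro h
  exact absurd h WithZero.zero_ne_coe

lemma topA_t2 (A : Set CpCarrier) : @T2Space Cp0 (topA A) := by
  let := topA A
  have key : ∀ a : CpCarrier, IsOpen ({(a : Cp0)}ᶜ : Set Cp0) := fun a => by
    refine topA_open.2 fun _ => (Set.finite_singleton a).subset ?_
    rintro b ⟨-, hb⟩
    simpa using hb
  refine ⟨fun x y hxy => ?_⟩
  induction x using WithZero.recZeroCoe with
  | zero =>
    induction y using WithZero.recZeroCoe with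
    | zero => exact absurd rfl hxy
    | coe b => exact ⟨_, _, key b, topA_isolated A b, by simp, by simp, disjoint_compl_left⟩
  | coe a => exact ⟨_, _, topA_isolated A a, key a, rfl, hxy.symm, disjoint_compl_right⟩

lemma topA_compact (A : Set CpCarrier) :
    @IsCompact Cp0 (topA A) (insert 0 ((↑) '' A)) := by
  let := topA A
  rw [isCompact_iff_ultrafilter_le_nhds]
  intro f hf
  rw [Filter.le_principal_iff] at hf
  by_cases h : (f : Filter Cp0) ≤ 𝓝 0
  · exact ⟨0, by simp, h⟩
  -- An ultrafilter not converging to zero contains a finite set, so it is principal.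
  obtain ⟨U, hU, hUf⟩ := Filter.not_le.1 h
  obtain ⟨V, hVU, hV, h0⟩ := mem_nhds_iff.1 hU
  have hVf : Vᶜ ∈ f := by
    rw [Ultrafilter.compl_mem_iff_notMem]
    exact fun hV => hUf (Filter.mem_of_superset hV hVU)
  have hfin : ((insert (0 : Cp0) ((↑) '' A)) ∩ Vᶜ).Finite := by
    refine ((topA_open.1 hV h0).image ((↑) : CpCarrier → Cp0)).subset ?_
    rintro _ ⟨rfl | ⟨a, ha, rfl⟩, hx⟩
    · exact absurd h0 hx
    · exact ⟨a, ⟨ha, hx⟩, rfl⟩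
  obtain ⟨x, hx, hfx⟩ := Ultrafilter.eq_pure_of_finite_mem hfin (Filter.inter_mem hf hVf)
  refine ⟨x, hx.1, ?_⟩
  rw [hfx]
  exact pure_le_nhds x

lemma topA_locallyCompact (A : Set CpCarrier) : @LocallyCompactSpace Cp0 (topA A) := by
  let := topA A
  have := topA_t2 A
  have : WeaklyLocallyCompactSpace Cp0 := ⟨fun x => by
    induction x using WithZero.recZeroCoe with
    | zero =>
      refine ⟨_, topA_compact A, IsOpen.mem_nhds (topA_open.2 fun _ => ?_) (by simp)⟩
      convert Set.finite_empty
      ext a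
      simp
    | coe a => exact ⟨_, isCompact_singleton, (topA_isolated A a).mem_nhds rfl⟩⟩
  infer_instance

/-- A zero-preserving map with finite fibres that sends almost all of `A` into `B` is continuous. -/
lemma topA_continuous {A B : Set CpCarrier} (f : Cp0 → Cp0) (g : CpCarrier → CpCarrier)
    (h0 : f 0 = 0) (hg : ∀ a : CpCarrier, f a = g a) (hfib : ∀ b, {a | g a = b}.Finite)
    (hAB : {a ∈ A | g a ∉ B}.Finite) : Continuous[topA A, topA B] f := by
  rw [continuous_def]
  intro U hU
  rw [topA_open] at hU ⊢
  intro h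
  rw [Set.mem_preimage, h0] at h
  refine (((hU h).biUnion fun b _ => hfib b).union hAB).subset ?_
  rintro a ⟨ha, haU⟩
  rw [Set.mem_preimage, hg] at haU
  by_cases hB : g a ∈ B
  · exact Or.inl (Set.mem_biUnion (show g a ∈ _ from ⟨hB, haU⟩) rfl)
  · exact Or.inr ⟨ha, hB⟩

/-! ### Shift-continuity -/

lemma finite_le (N : ℕ) : {y : CpCarrier | y.1.2 ≤ N}.Finite := by
  refine Set.Finite.of_finite_image (f := Subtype.val) ?_ Subtype.val_injective.injOn
  refine ((Set.finite_Iic N).prod (Set.finite_Iic N)).subset ?_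
  rintro _ ⟨y, hy, rfl⟩
  exact ⟨y.2.trans hy, hy⟩

lemma mul_val (a b : CpCarrier) : (a * b).1 =
    if a.1.2 < b.1.1 then (a.1.1 + (b.1.1 - a.1.2), b.1.2)
      else if a.1.2 = b.1.1 then (a.1.1, b.1.2)
      else (a.1.1, a.1.2 - b.1.1 + b.1.2) := rfl

lemma finite_fib_left (a t : CpCarrier) : {y | a * y = t}.Finite := by
  refine (finite_le (t.1.2 + a.1.2)).subset ?_
  rintro y rfl
  have := y.2
  simp only [Set.mem_ofPred_eq, mul_val]
  split_ifs <;> dsimp only <;> omega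

lemma finite_fib_right (a t : CpCarrier) : {y | y * a = t}.Finite := by
  refine (finite_le (t.1.2 + a.1.1)).subset ?_
  rintro y rfl
  simp only [Set.mem_ofPred_eq, mul_val]
  split_ifs <;> dsimp only <;> omega

/-- Attaching zero at infinity to an ideal gives a shift-continuous topology. -/
lemma topA_hlcsc (A : Set CpCarrier) (hl : ∀ s, ∀ a ∈ A, s * a ∈ A)
    (hr : ∀ s, ∀ a ∈ A, a * s ∈ A) : IsHLCSC (topA A) := by
  refine ⟨topA_t2 A, topA_locallyCompact A, fun s => ?_⟩
  induction s using WithZero.recZeroCoe with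
  | zero =>
    simp only [zero_mul, mul_zero]
    exact ⟨@continuous_const _ _ (topA A) (topA A) _, @continuous_const _ _ (topA A) (topA A) _⟩
  | coe s =>
    constructor
    · refine topA_continuous _ (fun y => s * y) (mul_zero _) (fun a => (WithZero.coe_mul s a).symm)
        (finite_fib_left s) ?_
      convert Set.finite_empty
      ext a
      simpa using hl s a
    · refine topA_continuous _ (fun y => y * s) (zero_mul _) (fun a => (WithZero.coe_mul a s).symm)
        (finite_fib_right s) ?_
      convert Set.finite_empty
      ext a
      simpa using hr s a

/-! ### Every topology in question is some `topA A` -/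

/-- Every nonzero point is isolated: `(m,n)` lies in the open finite set of points moved by right
multiplication by the idempotent `(n+1,n+1)`. -/
lemma isolated {τ : TopologicalSpace Cp0} (h : IsHLCSC τ) (a : CpCarrier) :
    IsOpen {(a : Cp0)} := by
  obtain ⟨h2, -, hs⟩ := h
  let e : CpCarrier := ⟨(a.1.2 + 1, a.1.2 + 1), le_rfl⟩
  have hopen : IsOpen {y : Cp0 | y * (e : Cp0) = y}ᶜ :=
    (isClosed_eq (hs e).2 continuous_id).isOpen_compl
  have hfin : ({y : Cp0 | y * (e : Cp0) = y}ᶜ : Set Cp0).Finite := by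
    refine ((finite_le a.1.2).image ((↑) : CpCarrier → Cp0)).subset ?_
    intro y hy
    induction y using WithZero.recZeroCoe with
    | zero => simp at hy
    | coe y =>
      refine ⟨y, ?_, rfl⟩
      by_contra hle
      apply hy
      rw [Set.mem_ofPred_eq, ← WithZero.coe_mul, WithZero.coe_inj, Subtype.ext_iff, mul_val]
      simp only [Set.mem_ofPred_eq, e] at hle ⊢
      split_ifs <;> ext <;> dsimp only <;> omega
  have ha : (a : Cp0) ∈ ({y : Cp0 | y * (e : Cp0) = y}ᶜ : Set Cp0) := by
    intro hh
    rw [Set.mem_ofPred_eq, ← WithZero.coe_mul, WithZero.coe_inj, Subtype.ext_iff, mul_val] at hh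
    simp [e] at hh
    have := congrArg Prod.snd hh
    simp at this
  have := hopen.sdiff (hfin.subset (Set.sdiff_subset (t := {(a : Cp0)}))).isClosed
  convert this
  ext x
  simp only [Set.mem_singleton_iff, Set.mem_sdiff, not_and, not_not]
  constructor
  · rintro rfl
    exact ⟨ha, fun _ => rfl⟩
  · exact fun hx => hx.2 hx.1

lemma finite_of_compact {τ : TopologicalSpace Cp0} (h : ∀ a : CpCarrier, IsOpen {(a : Cp0)})
    {K : Set Cp0} (hK : IsCompact K) (h0 : (0 : Cp0) ∉ K) : K.Finite := by
  refine hK.finite (isDiscrete_iff_forall_mem_exists_isOpen.2 fun x hx => ?_)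
  induction x using WithZero.recZeroCoe with
  | zero => exact absurd hx h0
  | coe a => exact ⟨_, h a, by simpa using hx⟩

/-- The set `A` is the trace of a compact neighbourhood `K` of zero: if `U` is an open set
containing zero, then `K \ U` is compact and consists of isolated points, hence finite. -/
lemma eq_topA {τ : TopologicalSpace Cp0} (h : IsHLCSC τ) : ∃ A, τ = topA A := by
  have := h.1
  have := h.2.1
  have hiso := isolated h
  obtain ⟨K, hK, hK0⟩ := exists_compact_mem_nhds (0 : Cp0)
  refine ⟨{a | (a : Cp0) ∈ K}, TopologicalSpace.ext_iff.2 fun U => ?_⟩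
  rw [topA_open]
  constructor
  · intro hU h0
    have := finite_of_compact hiso (hK.diff hU) (fun hh => hh.2 h0)
    exact (this.preimage (WithZero.coe_injective.injOn)).subset fun a ha => ha
  · intro hU
    rw [isOpen_iff_mem_nhds]
    intro x hx
    induction x using WithZero.recZeroCoe with
    | zero =>
      have hc := ((hU hx).image ((↑) : CpCarrier → Cp0)).isClosed.isOpen_compl.mem_nhds
        (x := (0 : Cp0)) (by simp)
      filter_upwards [hc, hK0] with y hy hyK
      induction y using WithZero.recZeroCoe with
      | zero => exact hx
      | coe a => exact by_contra fun hn => hy ⟨a, ⟨hyK, hn⟩, rfl⟩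
    | coe a =>
      exact Filter.mem_of_superset ((hiso a).mem_nhds rfl) (by simpa using hx)

/-! ### Homeomorphism types -/

lemma homeo_of_equiv {A B : Set CpCarrier} (e : CpCarrier ≃ CpCarrier)
    (he : ∀ a, a ∈ A ↔ e a ∈ B) : HomeoTop (topA A) (topA B) := by
  refine ⟨Equiv.optionCongr e, ?_, ?_⟩
  · refine topA_continuous _ e rfl (fun _ => rfl)
      (fun b => (Set.finite_singleton b).preimage e.injective.injOn) ?_
    convert Set.finite_empty
    ext a
    simpa using (he a).1
  · refine topA_continuous _ e.symm rfl (fun _ => rfl)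
      (fun b => (Set.finite_singleton b).preimage e.symm.injective.injOn) ?_
    convert Set.finite_empty
    ext a
    simp [he]

/-- Infinite coinfinite subsets of a countable set are conjugate under its permutations. -/
lemma homeo_of_infinite {A B : Set CpCarrier} (hA : A.Infinite) (hA' : Aᶜ.Infinite)
    (hB : B.Infinite) (hB' : Bᶜ.Infinite) : HomeoTop (topA A) (topA B) := by
  classical
  have := hA.to_subtype
  have := hB.to_subtype
  have : Infinite {a // ¬ a ∈ A} := hA'.to_subtype
  have : Infinite {a // ¬ a ∈ B} := hB'.to_subtype
  obtain ⟨e1⟩ : Nonempty ({a // a ∈ A} ≃ {a // a ∈ B}) := nonempty_equiv_of_countable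
  obtain ⟨e2⟩ : Nonempty ({a // ¬ a ∈ A} ≃ {a // ¬ a ∈ B}) := nonempty_equiv_of_countable
  refine homeo_of_equiv (Equiv.subtypeCongr e1 e2) fun a => ?_
  by_cases h : a ∈ A
  · simp [Equiv.subtypeCongr, h]
  · simpa [Equiv.subtypeCongr, h] using (e2 ⟨a, h⟩).2

/-- Only the class of `A` modulo finite sets matters. -/
lemma topA_congr {A B : Set CpCarrier} (h1 : (A \ B).Finite) (h2 : (B \ A).Finite) :
    topA A = topA B := by
  have key : ∀ {A B : Set CpCarrier} {U : Set Cp0}, (B \ A).Finite →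
      IsOpen[topA A] U → IsOpen[topA B] U := by
    intro A B U h hU
    rw [topA_open] at hU ⊢
    intro h0
    refine ((hU h0).union h).subset fun a ha => ?_
    by_cases haA : a ∈ A
    · exact Or.inl ⟨haA, ha.2⟩
    · exact Or.inr ⟨ha.1, haA⟩
  exact TopologicalSpace.ext_iff.2 fun U => ⟨key h2, key h1⟩

lemma homeo_refl (τ : TopologicalSpace Cp0) : HomeoTop τ τ :=
  ⟨Equiv.refl _, @continuous_id _ τ, @continuous_id _ τ⟩

lemma discrete_iff (A : Set CpCarrier) : @DiscreteTopology Cp0 (topA A) ↔ A.Finite := by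
  let := topA A
  constructor
  · intro h
    have := topA_open.1 (isOpen_discrete ({0} : Set Cp0)) rfl
    simpa using this
  · intro h
    exact discreteTopology_iff_forall_isOpen.2 fun U =>
      topA_open.2 fun _ => h.subset fun a ha => ha.1

lemma compact_iff (A : Set CpCarrier) : @CompactSpace Cp0 (topA A) ↔ Aᶜ.Finite := by
  let := topA A
  have := topA_t2 A
  constructor
  · intro h
    have hopen : IsOpen (insert (0 : Cp0) ((↑) '' A)) := by
      refine topA_open.2 fun _ => ?_
      convert Set.finite_empty
      ext a
      simp
    have := finite_of_compact (topA_isolated A) hopen.isClosed_compl.isCompact (by simp)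
    refine (this.preimage (WithZero.coe_injective.injOn)).subset fun a ha => ?_
    simpa using ha
  · intro h
    refine ⟨?_⟩
    have := (topA_compact A).union (h.image ((↑) : CpCarrier → Cp0)).isCompact
    convert this
    ext x
    induction x using WithZero.recZeroCoe with
    | zero => simp
    | coe a => simp [em]

lemma HomeoTop.compact {τ₁ τ₂ : TopologicalSpace Cp0} (h : HomeoTop τ₁ τ₂)
    (hc : @CompactSpace Cp0 τ₂) : @CompactSpace Cp0 τ₁ := by
  obtain ⟨f, -, h2⟩ := h
  exact @Function.Surjective.compactSpace _ _ τ₂ τ₁ _ h2 hc f.symm.surjective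

lemma HomeoTop.discrete {τ₁ τ₂ : TopologicalSpace Cp0} (h : HomeoTop τ₁ τ₂)
    (hc : @DiscreteTopology Cp0 τ₂) : @DiscreteTopology Cp0 τ₁ := by
  obtain ⟨f, h1, -⟩ := h
  exact @DiscreteTopology.of_continuous_injective _ _ τ₁ τ₂ hc _ h1 f.injective

lemma HomeoTop.symm {τ₁ τ₂ : TopologicalSpace Cp0} (h : HomeoTop τ₁ τ₂) : HomeoTop τ₂ τ₁ := by
  obtain ⟨f, h1, h2⟩ := h
  exact ⟨f.symm, h2, h1⟩

/-- The ideal of all `(m,n)` off the diagonal. -/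
def offDiag : Set CpCarrier := {a | a.1.1 < a.1.2}

lemma offDiag_infinite : offDiag.Infinite :=
  Set.infinite_of_injective_forall_mem
    (f := fun n : ℕ => (⟨(n, n + 1), Nat.le_succ n⟩ : CpCarrier))
    (fun _ _ h => congrArg (fun x : CpCarrier => x.1.1) h) (fun n => Nat.lt_succ_self n)

lemma offDiag_compl_infinite : offDiagᶜ.Infinite :=
  Set.infinite_of_injective_forall_mem
    (f := fun n : ℕ => (⟨(n, n), le_rfl⟩ : CpCarrier))
    (fun _ _ h => congrArg (fun x : CpCarrier => x.1.1) h) (fun n => lt_irrefl n)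

lemma offDiag_hlcsc : IsHLCSC (topA offDiag) := by
  refine topA_hlcsc _ ?_ ?_ <;>
  · intro s a ha
    have := s.2
    simp only [offDiag, Set.mem_ofPred_eq, mul_val] at ha ⊢
    split_ifs <;> dsimp only <;> omega

/-- Up to homeomorphism there are exactly three Hausdorff locally compact
shift-continuous topologies on `𝒞₊(p,q)⁰`. -/
theorem exactly_three_topologies_up_to_homeomorphism :
    ∃ τ₁ τ₂ τ₃ : TopologicalSpace Cp0,
      IsHLCSC τ₁ ∧ IsHLCSC τ₂ ∧ IsHLCSC τ₃ ∧
      ¬ HomeoTop τ₁ τ₂ ∧ ¬ HomeoTop τ₁ τ₃ ∧ ¬ HomeoTop τ₂ τ₃ ∧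
      ∀ τ : TopologicalSpace Cp0, IsHLCSC τ →
        HomeoTop τ τ₁ ∨ HomeoTop τ τ₂ ∨ HomeoTop τ τ₃ := by
  have hinf : (Set.univ : Set CpCarrier).Infinite :=
    offDiag_infinite.mono (Set.subset_univ _)
  have hd := (discrete_iff ∅).2 Set.finite_empty
  have hc := (compact_iff Set.univ).2 (by simp)
  refine ⟨topA ∅, topA Set.univ, topA offDiag, topA_hlcsc _ (by simp) (by simp),
    topA_hlcsc _ (by simp) (by simp), offDiag_hlcsc, fun h => ?_, fun h => ?_, fun h => ?_,
    fun τ hτ => ?_⟩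
  · exact hinf ((discrete_iff _).1 (h.symm.discrete hd))
  · exact offDiag_infinite ((discrete_iff _).1 (h.symm.discrete hd))
  · exact offDiag_compl_infinite ((compact_iff _).1 (h.symm.compact hc))
  · obtain ⟨A, rfl⟩ := eq_topA hτ
    by_cases hA : A.Finite
    · left
      rw [topA_congr (A := A) (B := ∅) (by simpa using hA) (by simp)]
      exact homeo_refl _
    by_cases hA' : Aᶜ.Finite
    · right; left
      rw [topA_congr (A := A) (B := Set.univ) (by simp)
        (by rwa [← Set.compl_eq_univ_sdiff])]
      exact homeo_refl _
    · exact Or.inr (Or.inr (homeo_of_infinite hA hA' offDiag_infinite offDiag_compl_infinite))
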